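/- arXiv:2503.10824 — 6 statements merged into one kernel-verified Lean document; each statement's English description precedes it below -/
import Mathlib

section
/- For every energy-preserving quadratic matrix H ∈ ℝ^{n×n²} (i.e. xᵀH(x⊗x) = 0 for all x ∈ ℝⁿ), there exists a matrix H̃ ∈ ℝ^{n×n²}, partitioned into n blocks H̃ = [H̃_1, …, H̃_n] with each block H̃_i ∈ ℝ^{n×n} skew-symmetric (H̃_i = −H̃_iᵀ), such that H(x⊗x) = H̃(x⊗x) for all x ∈ ℝⁿ. -/
/-!
Let `f u v w = ∑ h_{i,(j,k)} u_i v_j w_k`. Energy preservation says that the cubic form `f x x x`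
vanishes identically, hence so does its derivative:
`f e x x + f x e x + f x x e = 0` for all `x`, `e` (`trilin_deriv`). Take
`H̃_{i,(j,k)} = (h_{i,(j,k)} + h_{k,(j,i)} - h_{i,(k,j)} - h_{j,(k,i)}) / 3`, the part of the
symmetrization of `H` in `(i, k)` that is antisymmetric in `(j, k)`, suitably scaled. Then
`3 (H̃(x ⊗ x))_j = 2 f x e_j x - f x x e_j - f e_j x x`, which is `3 f x e_j x = 3 (H(x ⊗ x))_j`
by the derivative identity.
-/

open Matrix

/-- The quadratic map `x ↦ H (x ⊗ x)` for a matrix `H ∈ ℝ^{n×n²}` partitioned into `n`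
blocks `H = [H_1, …, H_n]`: `H i` is the `i`-th block and `H i j k` is the entry
`h_{i,(j,k)}`, so that the `j`-th component of `H (x ⊗ x)` is `∑_{i,k} h_{i,(j,k)} x_i x_k`. -/
def quadMap {n : ℕ} (H : Fin n → Matrix (Fin n) (Fin n) ℝ) (x : Fin n → ℝ) : Fin n → ℝ :=
  fun j => ∑ i, ∑ k, H i j k * (x i * x k)

/-- `H` is energy-preserving if `xᵀ H (x ⊗ x) = 0` for all `x ∈ ℝⁿ`. -/
def EnergyPreserving {n : ℕ} (H : Fin n → Matrix (Fin n) (Fin n) ℝ) : Prop :=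
  ∀ x : Fin n → ℝ, ∑ j, x j * quadMap H x j = 0

/-- The trilinear form `∑ h_{i,(j,k)} u_i v_j w_k` attached to `H`. -/
def trilin {n : ℕ} (H : Fin n → Matrix (Fin n) (Fin n) ℝ) (u v w : Fin n → ℝ) : ℝ :=
  ∑ i, ∑ j, ∑ k, H i j k * (u i * v j * w k)

lemma trilin_self {n : ℕ} (H : Fin n → Matrix (Fin n) (Fin n) ℝ) (hH : EnergyPreserving H)
    (x : Fin n → ℝ) : trilin H x x x = 0 := by
  rw [← hH x]
  simp only [trilin, quadMap, Finset.mul_sum]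
  rw [Finset.sum_comm]
  refine Finset.sum_congr rfl fun j _ => Finset.sum_congr rfl fun i _ =>
    Finset.sum_congr rfl fun k _ => ?_
  ring

/-- The derivative of the vanishing cubic form `f x x x` in the direction `e` vanishes. -/
lemma trilin_deriv {n : ℕ} (H : Fin n → Matrix (Fin n) (Fin n) ℝ) (hH : EnergyPreserving H)
    (x e : Fin n → ℝ) : trilin H e x x + trilin H x e x + trilin H x x e = 0 := by
  have h1 := trilin_self H hH (x + e)
  have h2 := trilin_self H hH (x - e)
  have h3 := trilin_self H hH e
  -- The part of `f (x + t e) (x + t e) (x + t e)` that is odd in `t`, at `t = 1`.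
  have key : trilin H (x + e) (x + e) (x + e) - trilin H (x - e) (x - e) (x - e)
      = 2 * (trilin H e x x + trilin H x e x + trilin H x x e) + 2 * trilin H e e e := by
    simp only [trilin, Finset.mul_sum, ← Finset.sum_add_distrib, ← Finset.sum_sub_distrib]
    refine Finset.sum_congr rfl fun i _ => Finset.sum_congr rfl fun j _ =>
      Finset.sum_congr rfl fun k _ => ?_
    simp only [Pi.add_apply, Pi.sub_apply]
    ring
  linarith

/-- Every energy-preserving quadratic matrix `H` admits an equivalent representation `H̃`
whose blocks are all skew-symmetric. -/
theorem energy_preserving_exists_skew_representation {n : ℕ}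
    (H : Fin n → Matrix (Fin n) (Fin n) ℝ) (hH : EnergyPreserving H) :
    ∃ Ht : Fin n → Matrix (Fin n) (Fin n) ℝ,
      (∀ i, (Ht i)ᵀ = -(Ht i)) ∧ ∀ x : Fin n → ℝ, quadMap H x = quadMap Ht x := by
  refine ⟨fun i => Matrix.of fun j k => (H i j k + H k j i - H i k j - H j k i) / 3, ?_, ?_⟩
  · intro i
    ext j k
    simp only [transpose_apply, of_apply, Matrix.neg_apply]
    ring
  · intro x
    funext j
    have h := trilin_deriv H hH x (Pi.single j 1)
    have e1 : trilin H (Pi.single j 1) x x = ∑ i, ∑ k, H j k i * (x i * x k) := by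
      simp only [trilin, Pi.single_apply, ite_mul, mul_ite, one_mul, zero_mul, mul_zero,
        Finset.sum_ite_irrel, Finset.sum_const_zero, Finset.sum_ite_eq', Finset.mem_univ, if_true]
      rw [Finset.sum_comm]
      exact Finset.sum_congr rfl fun i _ => Finset.sum_congr rfl fun k _ => by ring
    have e2 : trilin H x (Pi.single j 1) x = ∑ i, ∑ k, H i j k * (x i * x k) := by
      simp [trilin, Pi.single_apply, Finset.sum_ite_irrel]
    have e3 : trilin H x x (Pi.single j 1) = ∑ i, ∑ k, H i k j * (x i * x k) := by
      simp [trilin, Pi.single_apply]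
    have e4 : ∑ i, ∑ k, H k j i * (x i * x k) = ∑ i, ∑ k, H i j k * (x i * x k) := by
      rw [Finset.sum_comm]
      exact Finset.sum_congr rfl fun i _ => Finset.sum_congr rfl fun k _ => by ring
    have e5 : quadMap (fun i => Matrix.of fun j k =>
          (H i j k + H k j i - H i k j - H j k i) / 3) x j
        = (∑ i, ∑ k, H i j k * (x i * x k) + ∑ i, ∑ k, H k j i * (x i * x k)
          - ∑ i, ∑ k, H i k j * (x i * x k) - ∑ i, ∑ k, H j k i * (x i * x k)) / 3 := by
      simp only [quadMap, of_apply, Finset.sum_div, ← Finset.sum_add_distrib,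
        ← Finset.sum_sub_distrib]
      exact Finset.sum_congr rfl fun i _ => Finset.sum_congr rfl fun k _ => by ring
    rw [e5, e4, ← e1, ← e2, ← e3]
    have e6 : quadMap H x j = trilin H x (Pi.single j 1) x := e2.symm
    rw [e6]
    linarith
end

section
/- Let H ∈ ℝ^{n×n²} be energy-preserving. For every choice of real numbers c(i,j,k), one for each triple of indices 1 ≤ i < j < k ≤ n, there exists a unique matrix H̃ ∈ ℝ^{n×n²} with skew-symmetric blocks H̃_i = −H̃_iᵀ such that H(x⊗x) = H̃(x⊗x) for all x ∈ ℝⁿ and such that the entry h̃_{i,(j,k)} equals c(i,j,k) for every i < j < k. In particular, n(n−1)(n−2)/6 entries of H̃ can be freely selected. -/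
/-!
Polarization shows that the map `x ↦ H (x ⊗ x)` determines, and is determined by, the symmetrized
coefficients `S j i k = h_{i,(j,k)} + h_{k,(j,i)}` (`symmCoeff`), and that energy preservation gives
the cyclic identity `S j i k + S i k j + S k i j = 0`. Hence the skew-symmetric representations are
the solutions `T` of `T i j k = -T i k j`, `T i j k + T k j i = S j i k`. By the cyclic identity
`T i j k = (S j i k - S k i j) / 3` is one solution. Solutions of the homogeneous system are exactly
the totally antisymmetric tensors, and such a tensor is given by arbitrary values at the indices
`i < j < k`: existence is `antisymmetrize`, uniqueness is `eq_zero_of_antisymm`.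
-/


open Matrix

/-- The symmetrized coefficient `h_{i,(j,k)} + h_{k,(j,i)}` of the monomial `x_i x_k` in the `j`-th
component of `H (x ⊗ x)`. -/
def symmCoeff {n : ℕ} (H : Fin n → Matrix (Fin n) (Fin n) ℝ) (j i k : Fin n) : ℝ :=
  H i j k + H k j i

lemma quadMap_polarization {n : ℕ} (H : Fin n → Matrix (Fin n) (Fin n) ℝ) (j a b : Fin n) :
    quadMap H (Pi.single a 1 + Pi.single b 1) j - quadMap H (Pi.single a 1) j
      - quadMap H (Pi.single b 1) j = symmCoeff H j a b := by
  simp only [quadMap, symmCoeff, Pi.add_apply, Pi.single_apply, mul_add,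
    Finset.sum_add_distrib, mul_ite, mul_one, mul_zero, Finset.sum_ite_eq', Finset.mem_univ,
    if_true]
  ring

lemma quadMap_eq_iff {n : ℕ} (H K : Fin n → Matrix (Fin n) (Fin n) ℝ) :
    (∀ x, quadMap H x = quadMap K x) ↔ ∀ j i k, symmCoeff H j i k = symmCoeff K j i k := by
  constructor
  · intro h j i k
    simp only [← quadMap_polarization, h]
  · intro h x
    have key : ∀ L : Fin n → Matrix (Fin n) (Fin n) ℝ, ∀ j,
        2 * quadMap L x j = ∑ i, ∑ k, symmCoeff L j i k * (x i * x k) := by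
      intro L j
      have h2 : quadMap L x j = ∑ i, ∑ k, L k j i * (x i * x k) := by
        rw [quadMap, Finset.sum_comm]
        simp only [mul_comm]
      simp only [symmCoeff, add_mul, Finset.sum_add_distrib]
      rw [← h2, two_mul]
      rfl
    funext j
    have hH := key H j
    have hK := key K j
    simp only [h] at hH
    linarith

/-- The full polarization of the cubic form `xᵀ H (x ⊗ x)` at `e_i, e_j, e_k` is this cyclic sum, so it
vanishes together with the form. -/
lemma EnergyPreserving.cyclic {n : ℕ} {H : Fin n → Matrix (Fin n) (Fin n) ℝ}
    (hH : EnergyPreserving H) (i j k : Fin n) :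
    symmCoeff H j i k + symmCoeff H i k j + symmCoeff H k i j = 0 := by
  -- Evaluation at all sums of one, two or three of the basis vectors `e_i`, `e_j`, `e_k`.
  have h1 := hH (Pi.single i 1 + Pi.single j 1 + Pi.single k 1)
  have h2 := hH (Pi.single i 1 + Pi.single j 1)
  have h3 := hH (Pi.single i 1 + Pi.single k 1)
  have h4 := hH (Pi.single j 1 + Pi.single k 1)
  have h5 := hH (Pi.single i 1)
  have h6 := hH (Pi.single j 1)
  have h7 := hH (Pi.single k 1)
  simp only [quadMap, Pi.add_apply, Pi.single_apply, add_mul, mul_add,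
    Finset.sum_add_distrib, mul_ite, ite_mul, mul_one, mul_zero, one_mul, zero_mul,
    Finset.sum_ite_eq', Finset.mem_univ, if_true] at h1 h2 h3 h4 h5 h6 h7
  simp only [symmCoeff]
  linarith

/-- The totally antisymmetric tensor whose entries at `i < j < k` are `d i j k`: the signed sum over
all permutations of the restriction of `d` to strictly increasing triples. -/
noncomputable def antisymmetrize {n : ℕ} (d : Fin n → Fin n → Fin n → ℝ) (i j k : Fin n) : ℝ :=
  let g : Fin n → Fin n → Fin n → ℝ := fun p q r => if p < q ∧ q < r then d p q r else 0
  g i j k - g i k j + g j k i - g j i k + g k i j - g k j i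

lemma antisymmetrize_of_lt {n : ℕ} (d : Fin n → Fin n → Fin n → ℝ) {i j k : Fin n}
    (hij : i < j) (hjk : j < k) : antisymmetrize d i j k = d i j k := by
  simp [antisymmetrize, hij, hjk, hij.not_gt, hjk.not_gt, (hij.trans hjk).not_gt]

/-- A tensor antisymmetric under two transpositions generating the permutations of the three
indices vanishes as soon as it vanishes on strictly increasing triples. -/
lemma eq_zero_of_antisymm {n : ℕ} {D : Fin n → Fin n → Fin n → ℝ}
    (h₁ : ∀ i j k, D i j k = -D i k j) (h₂ : ∀ i j k, D i j k = -D k j i)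
    (h₀ : ∀ i j k, i < j → j < k → D i j k = 0) (i j k : Fin n) : D i j k = 0 := by
  have h₃ : ∀ i j k, D i j k = -D j i k := fun i j k => by
    rw [h₁ i j k, h₂ i k j, h₁ j k i, neg_neg]
  rcases lt_trichotomy i j with hij | rfl | hij
  · rcases lt_trichotomy j k with hjk | rfl | hjk
    · exact h₀ i j k hij hjk
    · linarith [h₁ i j j]
    · rcases lt_trichotomy i k with hik | rfl | hik
      · linarith [h₁ i j k, h₀ i k j hik hjk]
      · linarith [h₂ i j i]
      · linarith [h₁ i j k, h₃ i k j, h₀ k i j hik hij]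
  · linarith [h₃ i i k]
  · rcases lt_trichotomy j k with hjk | rfl | hjk
    · rcases lt_trichotomy i k with hik | rfl | hik
      · linarith [h₃ i j k, h₀ j i k hij hik]
      · linarith [h₂ i j i]
      · linarith [h₃ i j k, h₁ j i k, h₀ j k i hjk hik]
    · linarith [h₁ i j j]
    · linarith [h₂ i j k, h₀ k j i hjk hij]

/-- Given an energy-preserving `H` and an arbitrary choice of values `c i j k` for the
entries with `i < j < k`, there is a unique equivalent `H̃` with skew-symmetric blocks
realizing those entries: `n(n−1)(n−2)/6` entries of `H̃` can be freely selected. -/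
theorem energy_preserving_skew_representation_unique_given_free_entries {n : ℕ}
    (H : Fin n → Matrix (Fin n) (Fin n) ℝ) (hH : EnergyPreserving H)
    (c : Fin n → Fin n → Fin n → ℝ) :
    ∃! Ht : Fin n → Matrix (Fin n) (Fin n) ℝ,
      (∀ i, (Ht i)ᵀ = -(Ht i)) ∧
      (∀ x : Fin n → ℝ, quadMap H x = quadMap Ht x) ∧
      (∀ i j k : Fin n, i < j → j < k → Ht i j k = c i j k) := by
  have cyc := hH.cyclic
  have symm : ∀ j i k, symmCoeff H j i k = symmCoeff H j k i := fun j i k => add_comm _ _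
  let T₀ : Fin n → Fin n → Fin n → ℝ := fun i j k => (symmCoeff H j i k - symmCoeff H k i j) / 3
  let A := antisymmetrize fun i j k => c i j k - T₀ i j k
  refine ⟨fun i => Matrix.of fun j k => T₀ i j k + A i j k, ⟨?_, ?_, ?_⟩, ?_⟩
  · intro i
    ext j k
    simp only [Matrix.transpose_apply, Matrix.neg_apply, Matrix.of_apply, T₀, A, antisymmetrize]
    ring
  · rw [quadMap_eq_iff]
    intro j i k
    have hA : A i j k + A k j i = 0 := by
      simp only [A, antisymmetrize]
      ring
    have hT : T₀ i j k + T₀ k j i = symmCoeff H j i k := by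
      simp only [T₀]
      linarith [cyc i j k, symm j i k, symm i k j, symm k i j]
    rw [symmCoeff.eq_1 (fun i => Matrix.of fun j k => T₀ i j k + A i j k)]
    simp only [Matrix.of_apply]
    linarith
  · intro i j k hij hjk
    simp only [Matrix.of_apply, A, antisymmetrize_of_lt _ hij hjk]
    ring
  · rintro K ⟨hskew, hquad, hc⟩
    rw [quadMap_eq_iff] at hquad
    have hK : ∀ i j k, K i k j = -K i j k := fun i j k => by
      simpa using congrFun (congrFun (hskew i) j) k
    have hzero := eq_zero_of_antisymm (D := fun i j k => K i j k - (T₀ i j k + A i j k))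
      (fun i j k => by
        simp only [T₀, A, antisymmetrize]
        linarith [hK i j k])
      (fun i j k => by
        have hS := hquad j i k
        rw [symmCoeff.eq_1 K] at hS
        simp only [T₀, A, antisymmetrize]
        linarith [cyc i j k, symm j i k, symm i k j, symm k i j])
      (fun i j k hij hjk => by
        simp only [A, antisymmetrize_of_lt _ hij hjk, hc i j k hij hjk]
        ring)
    funext i
    ext j k
    exact sub_eq_zero.mp (hzero i j k)
end

section
/- Let H ∈ ℝ^{n×n²} be energy-preserving and let H̃ ∈ ℝ^{n×n²} have skew-symmetric blocks H̃_i = −H̃_iᵀ and satisfy H(x⊗x) = H̃(x⊗x) for all x ∈ ℝⁿ. Then for all distinct indices i ≠ k one has h̃_{k,(k,i)} = −h_{k,(i,k)}. -/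
open Matrix

/-- For an energy-preserving `H` and an equivalent `H̃` with skew-symmetric blocks, the
entries `h̃_{k,(k,i)}` for `i ≠ k` are determined: `h̃_{k,(k,i)} = −h_{k,(i,k)}`. -/
theorem skew_representation_determined_entries {n : ℕ}
    (H Ht : Fin n → Matrix (Fin n) (Fin n) ℝ)
    (hH : EnergyPreserving H)
    (hskew : ∀ i, (Ht i)ᵀ = -(Ht i))
    (hequiv : ∀ x : Fin n → ℝ, quadMap H x = quadMap Ht x) :
    ∀ i k : Fin n, i ≠ k → Ht k k i = -(H k i k) := by
  intro i k _
  -- Evaluating at the basis vector `e_k` isolates the coefficient of `x_k ^ 2` in component `i`.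
  have hdiag := congrFun (hequiv (Pi.single k 1)) i
  have hsk := congrFun (congrFun (hskew k) k) i
  simp [quadMap, Pi.single_apply] at hdiag hsk
  linarith
end

section
/- If H̃ ∈ ℝ^{n×n²} satisfies the row-wise skew-symmetry condition h̃_{i,(k,j)} = −h̃_{k,(i,j)} for all i, j, k ∈ {1, …, n}, then H̃ is energy-preserving, i.e. xᵀH̃(x⊗x) = 0 for all x ∈ ℝⁿ. -/
/-- The row-wise skew-symmetry condition `h̃_{i,(k,j)} = −h̃_{k,(i,j)}` implies that `H̃` is
energy-preserving. -/
theorem rowwise_skew_energy_preserving {n : ℕ}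
    (Ht : Fin n → Matrix (Fin n) (Fin n) ℝ)
    (hskew : ∀ i j k : Fin n, Ht i k j = -(Ht k i j)) :
    EnergyPreserving Ht := by
  intro x
  simp only [quadMap, Finset.mul_sum]
  -- Exchanging the block index `i` with the row index `j` negates each summand,
  -- so the sum equals its own negative.
  have h : ∑ j, ∑ i, ∑ k, x j * (Ht i j k * (x i * x k))
      = -∑ j, ∑ i, ∑ k, x j * (Ht i j k * (x i * x k)) := by
    conv_lhs => rw [Finset.sum_comm]
    simp only [← Finset.sum_neg_distrib]
    refine Finset.sum_congr rfl fun i _ => Finset.sum_congr rfl fun j _ =>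
      Finset.sum_congr rfl fun k _ => ?_
    rw [hskew i k j]
    ring
  linarith
end

section
/- For every energy-preserving matrix H ∈ ℝ^{n×n²} there exists a matrix H̃ ∈ ℝ^{n×n²} satisfying the row-wise skew-symmetry condition h̃_{i,(k,j)} = −h̃_{k,(i,j)} for all i, j, k ∈ {1, …, n}, such that H(x⊗x) = H̃(x⊗x) for all x ∈ ℝⁿ. -/
/-- The trilinear form with coefficients `H`; on the diagonal it is `xᵀ H (x ⊗ x)`. -/
def trilinForm {n : ℕ} (H : Fin n → Matrix (Fin n) (Fin n) ℝ) (x y z : Fin n → ℝ) : ℝ :=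
  ∑ j, ∑ i, ∑ k, H i j k * (x i * y j * z k)

lemma trilinForm_add_left {n : ℕ} (H : Fin n → Matrix (Fin n) (Fin n) ℝ)
    (x x' y z : Fin n → ℝ) :
    trilinForm H (x + x') y z = trilinForm H x y z + trilinForm H x' y z := by
  simp only [trilinForm, Pi.add_apply, add_mul, mul_add, Finset.sum_add_distrib]

lemma trilinForm_add_mid {n : ℕ} (H : Fin n → Matrix (Fin n) (Fin n) ℝ)
    (x y y' z : Fin n → ℝ) :
    trilinForm H x (y + y') z = trilinForm H x y z + trilinForm H x y' z := by
  simp only [trilinForm, Pi.add_apply, add_mul, mul_add, Finset.sum_add_distrib]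

lemma trilinForm_add_right {n : ℕ} (H : Fin n → Matrix (Fin n) (Fin n) ℝ)
    (x y z z' : Fin n → ℝ) :
    trilinForm H x y (z + z') = trilinForm H x y z + trilinForm H x y z' := by
  simp only [trilinForm, Pi.add_apply, mul_add, Finset.sum_add_distrib]

lemma trilinForm_single {n : ℕ} (H : Fin n → Matrix (Fin n) (Fin n) ℝ) (i j k : Fin n) :
    trilinForm H (Pi.single i 1) (Pi.single j 1) (Pi.single k 1) = H i j k := by
  simp [trilinForm, Pi.single_apply]

lemma EnergyPreserving.trilinForm_diag {n : ℕ} {H : Fin n → Matrix (Fin n) (Fin n) ℝ}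
    (hH : EnergyPreserving H) (x : Fin n → ℝ) : trilinForm H x x x = 0 := by
  rw [← hH x]
  simp only [trilinForm, quadMap, Finset.mul_sum]
  refine Finset.sum_congr rfl fun j _ => Finset.sum_congr rfl fun i _ =>
    Finset.sum_congr rfl fun k _ => ?_
  ring

/-- Polarization of the vanishing cubic form `x ↦ xᵀ H (x ⊗ x)`. -/
lemma EnergyPreserving.sum_perm_eq_zero {n : ℕ} {H : Fin n → Matrix (Fin n) (Fin n) ℝ}
    (hH : EnergyPreserving H) (i j k : Fin n) :
    H i j k + H i k j + H j i k + H j k i + H k i j + H k j i = 0 := by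
  have key : ∀ x y z : Fin n → ℝ, trilinForm H x y z + trilinForm H x z y + trilinForm H y x z
      + trilinForm H y z x + trilinForm H z x y + trilinForm H z y x = 0 := by
    intro x y z
    have h1 := hH.trilinForm_diag x
    have h2 := hH.trilinForm_diag y
    have h3 := hH.trilinForm_diag z
    have h4 := hH.trilinForm_diag (x + y)
    have h5 := hH.trilinForm_diag (x + z)
    have h6 := hH.trilinForm_diag (y + z)
    have h7 := hH.trilinForm_diag (x + y + z)
    simp only [trilinForm_add_left, trilinForm_add_mid, trilinForm_add_right] at h4 h5 h6 h7
    linarith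
  simpa only [trilinForm_single] using
    key (Pi.single i 1) (Pi.single j 1) (Pi.single k 1)

/-- The quadratic map depends only on the part of the coefficients symmetric in the two
indices contracted with `x`. -/
lemma quadMap_eq_of_symm_eq {n : ℕ} {H H' : Fin n → Matrix (Fin n) (Fin n) ℝ}
    (h : ∀ i j k, H i j k + H k j i = H' i j k + H' k j i) (x : Fin n → ℝ) :
    quadMap H x = quadMap H' x := by
  have dbl : ∀ (G : Fin n → Matrix (Fin n) (Fin n) ℝ) (j : Fin n),
      2 * quadMap G x j = ∑ i, ∑ k, (G i j k + G k j i) * (x i * x k) := by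
    intro G j
    have hswap : quadMap G x j = ∑ i, ∑ k, G k j i * (x i * x k) := by
      rw [quadMap, Finset.sum_comm]
      simp only [mul_comm (x _) (x _)]
    simp only [add_mul, Finset.sum_add_distrib]
    rw [← hswap, two_mul]
    rfl
  funext j
  have e : 2 * quadMap H x j = 2 * quadMap H' x j := by
    rw [dbl, dbl]
    simp only [h]
  linarith

/-- Every energy-preserving `H` admits an equivalent representation `H̃` satisfying the
row-wise skew-symmetry condition `h̃_{i,(k,j)} = −h̃_{k,(i,j)}`. -/
theorem energy_preserving_exists_rowwise_skew_representation {n : ℕ}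
    (H : Fin n → Matrix (Fin n) (Fin n) ℝ) (hH : EnergyPreserving H) :
    ∃ Ht : Fin n → Matrix (Fin n) (Fin n) ℝ,
      (∀ i j k : Fin n, Ht i k j = -(Ht k i j)) ∧
      ∀ x : Fin n → ℝ, quadMap H x = quadMap Ht x := by
  refine ⟨fun i => Matrix.of fun j k => (H i j k + H k j i - H j i k - H k i j) / 3,
    fun i j k => ?_, quadMap_eq_of_symm_eq fun i j k => ?_⟩
  · simp only [Matrix.of_apply]
    ring
  · simp only [Matrix.of_apply]
    linarith [hH.sum_perm_eq_zero i j k]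
end

section
/- If H ∈ ℝ^{n×n²} is energy-preserving, then h_{i,(i,i)} = 0 for every i ∈ {1, …, n}, and for all distinct indices i ≠ k one has h_{i,(k,k)} + h_{k,(i,k)} + h_{k,(k,i)} = 0. -/
lemma sum_two_single {n : ℕ} (i k : Fin n) (a b : ℝ) (f : Fin n → ℝ) :
    ∑ j, (Pi.single i a + Pi.single k b : Fin n → ℝ) j * f j = a * f i + b * f k := by
  simp [add_mul, Finset.sum_add_distrib, Pi.single_apply]

/-- The energy identity at `x = a e_i + b e_k`, expanded. -/
lemma EnergyPreserving.cubic {n : ℕ} {H : Fin n → Matrix (Fin n) (Fin n) ℝ}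
    (hH : EnergyPreserving H) (i k : Fin n) (a b : ℝ) :
    a ^ 3 * H i i i + a ^ 2 * b * (H i i k + H i k i + H k i i)
      + a * b ^ 2 * (H i k k + H k i k + H k k i) + b ^ 3 * H k k k = 0 := by
  have quad : ∀ (x : Fin n → ℝ) (j : Fin n),
      quadMap H x j = ∑ p, x p * ∑ q, x q * H p j q := by
    intro x j
    simp only [quadMap, Finset.mul_sum]
    exact Finset.sum_congr rfl fun p _ => Finset.sum_congr rfl fun q _ => by ring
  have h := hH (Pi.single i a + Pi.single k b)
  simp only [quad, sum_two_single] at h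
  linear_combination h

/-- For energy-preserving `H`: the totally diagonal entries vanish, and for `i ≠ k` one has
`h_{i,(k,k)} + h_{k,(i,k)} + h_{k,(k,i)} = 0`. -/
theorem energy_preserving_diagonal_conditions {n : ℕ}
    (H : Fin n → Matrix (Fin n) (Fin n) ℝ) (hH : EnergyPreserving H) :
    (∀ i : Fin n, H i i i = 0) ∧
    (∀ i k : Fin n, i ≠ k → H i k k + H k i k + H k k i = 0) := by
  refine ⟨fun i => ?_, fun i k _ => ?_⟩
  · linear_combination hH.cubic i i 1 0
  -- Half the sum of the values at `(1, 1)` and `(1, -1)` is the `a³` coefficient plus the `a b²` one.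
  · linear_combination (hH.cubic i k 1 1 + hH.cubic i k 1 (-1)) / 2 - hH.cubic i k 1 0
end
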